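/- Let A be a Hopf algebra over a field k with bijective antipode S and let P, Q ∈ A be nonzero idempotents. The following are equivalent: (1) P is a right group-like projection and Q is a right shift of P, i.e. Δ(Q)(1 ⊗ Q) = P ⊗ Q = (1 ⊗ Q)Δ(Q); (2) (1 ⊗ S⁻¹(Q))Δ(P) = Q ⊗ S⁻¹(Q) and Δ(P)(1 ⊗ S(Q)) = Q ⊗ S(Q). Moreover, if Q is a right shift of P then there exists a linear functional μ on A such that Q = (id ⊗ μ)(Δ(P)), and S²(Q) = Q if and only if S²(P) = P. -/

import Mathlib

open scoped TensorProduct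

noncomputable section

variable (k : Type*) [Field k] {A : Type*} [Ring A] [HopfAlgebra k A]

/-- `P` is a right group-like projection: a nonzero idempotent with
`Δ(P)(1 ⊗ P) = P ⊗ P = (1 ⊗ P)Δ(P)`. -/
def IsRightGroupLikeProjection (P : A) : Prop :=
  P ≠ 0 ∧ P * P = P ∧
    Coalgebra.comul (R := k) P * ((1 : A) ⊗ₜ[k] P) = P ⊗ₜ[k] P ∧
    ((1 : A) ⊗ₜ[k] P) * Coalgebra.comul (R := k) P = P ⊗ₜ[k] P

/-- `P` is a left group-like projection: a nonzero idempotent with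
`Δ(P)(P ⊗ 1) = P ⊗ P = (P ⊗ 1)Δ(P)`. -/
def IsLeftGroupLikeProjection (P : A) : Prop :=
  P ≠ 0 ∧ P * P = P ∧
    Coalgebra.comul (R := k) P * (P ⊗ₜ[k] (1 : A)) = P ⊗ₜ[k] P ∧
    (P ⊗ₜ[k] (1 : A)) * Coalgebra.comul (R := k) P = P ⊗ₜ[k] P

/-- A two-sided group-like projection. -/
def IsTwoSidedGroupLikeProjection (P : A) : Prop :=
  IsRightGroupLikeProjection k P ∧ IsLeftGroupLikeProjection k P

/-- `N_P^l = {x : (1 ⊗ P)Δ(x) = x ⊗ P}`. -/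
def NPlSet (P : A) : Set A :=
  {x : A | ((1 : A) ⊗ₜ[k] P) * Coalgebra.comul (R := k) x = x ⊗ₜ[k] P}

/-- `N_P^r = {x : Δ(x)(1 ⊗ P) = x ⊗ P}`. -/
def NPrSet (P : A) : Set A :=
  {x : A | Coalgebra.comul (R := k) x * ((1 : A) ⊗ₜ[k] P) = x ⊗ₜ[k] P}

/-- `N_P = N_P^l ∩ N_P^r`. -/
def NPSet (P : A) : Set A := NPlSet k P ∩ NPrSet k P

/-- `V_P = {(μ ⊗ id)(Δ(P)) : μ ∈ A*}`, the smallest left coideal containing `P`. -/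
def VPSet (P : A) : Set A :=
  {x : A | ∃ μ : A →ₗ[k] k,
    x = TensorProduct.lid k A ((TensorProduct.map μ LinearMap.id) (Coalgebra.comul (R := k) P))}

/-- A submodule `N ⊆ A` is a left coideal if `Δ(N) ⊆ A ⊗ N`. -/
def IsLeftCoideal (N : Submodule k A) : Prop :=
  ∀ x ∈ N, Coalgebra.comul (R := k) x ∈
    LinearMap.range (TensorProduct.map (LinearMap.id : A →ₗ[k] A) N.subtype)

/-- A subalgebra `N ⊆ A` is a left coideal subalgebra if `Δ(N) ⊆ A ⊗ N`. -/
def IsLeftCoidealSubalgebra (N : Subalgebra k A) : Prop :=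
  IsLeftCoideal k (Subalgebra.toSubmodule N)

open Coalgebra HopfAlgebra WithConv

section Antipode

variable {k}

/-- The map `a ⊗ b ↦ a₁ ⊗ f(a₂) b`. -/
def twistedGalois (f : A →ₗ[k] A) : A ⊗[k] A →ₗ[k] A ⊗[k] A :=
  LinearMap.lTensor A (LinearMap.mul' k A) ∘ₗ (TensorProduct.assoc k A A A).toLinearMap ∘ₗ
    LinearMap.rTensor A (LinearMap.lTensor A f ∘ₗ comul)

lemma twistedGalois_tmul (f : A →ₗ[k] A) (a b : A) :
    twistedGalois f (a ⊗ₜ[k] b) = LinearMap.lTensor A f (comul a) * ((1 : A) ⊗ₜ[k] b) := by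
  simp only [twistedGalois, LinearMap.comp_apply, LinearMap.rTensor_tmul, LinearEquiv.coe_coe]
  induction LinearMap.lTensor A f (comul a) using TensorProduct.induction_on with
  | zero => simp
  | tmul x y => simp
  | add x y hx hy => simp [TensorProduct.add_tmul, add_mul, hx, hy]

lemma twistedGalois_mul_one_tmul (f : A →ₗ[k] A) (t : A ⊗[k] A) (b : A) :
    twistedGalois f (t * ((1 : A) ⊗ₜ[k] b)) = twistedGalois f t * ((1 : A) ⊗ₜ[k] b) := by
  induction t using TensorProduct.induction_on with
  | zero => simp
  | tmul x y => simp [twistedGalois_tmul, mul_assoc]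
  | add x y hx hy => simp [add_mul, hx, hy]

lemma twistedGalois_lTensor_comul (f g : A →ₗ[k] A) (a : A) :
    twistedGalois f (LinearMap.lTensor A g (comul a)) =
      LinearMap.lTensor A (toConv f * toConv g).ofConv (comul a) := by
  have h : ∀ t : A ⊗[k] A, twistedGalois f (LinearMap.lTensor A g t) =
      LinearMap.lTensor A (LinearMap.mul' k A ∘ₗ TensorProduct.map f g)
        (TensorProduct.assoc k A A A (LinearMap.rTensor A comul t)) := by
    intro t
    induction t using TensorProduct.induction_on with
    | zero => simp
    | tmul x y =>
      simp only [LinearMap.lTensor_tmul, twistedGalois_tmul, LinearMap.rTensor_tmul]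
      induction comul (R := k) x using TensorProduct.induction_on with
      | zero => simp
      | tmul u v => simp
      | add u v hu hv => simp [TensorProduct.add_tmul, add_mul, hu, hv]
    | add x y hx hy => simp [hx, hy]
  rw [h, coassoc_apply, ← LinearMap.lTensor_comp_apply]
  rfl

lemma twistedGalois_twistedGalois {f g : A →ₗ[k] A} (h : toConv f * toConv g = 1)
    (t : A ⊗[k] A) : twistedGalois f (twistedGalois g t) = t := by
  induction t using TensorProduct.induction_on with
  | zero => simp
  | tmul a b =>
    rw [twistedGalois_tmul g, twistedGalois_mul_one_tmul, twistedGalois_lTensor_comul, h,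
      LinearMap.convOne_def]
    simp [LinearMap.lTensor_comp_apply]
  | add x y hx hy => simp [hx, hy]

/-- The maps `a ⊗ b ↦ a₁ ⊗ a₂ b` and `a ⊗ b ↦ a₁ ⊗ S(a₂) b` are mutually inverse. -/
lemma comul_mul_one_tmul_eq_iff (a b : A) (t : A ⊗[k] A) :
    comul (R := k) a * ((1 : A) ⊗ₜ[k] b) = t ↔ a ⊗ₜ[k] b = twistedGalois (antipode k) t := by
  have h : comul (R := k) a * ((1 : A) ⊗ₜ[k] b) = twistedGalois LinearMap.id (a ⊗ₜ[k] b) := by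
    simp [twistedGalois_tmul]
  rw [h]
  constructor
  · rintro rfl
    rw [twistedGalois_twistedGalois LinearMap.antipode_mul_id]
  · intro h'
    rw [h', twistedGalois_twistedGalois LinearMap.id_mul_antipode]

lemma lTensor_antipode_one_tmul_mul (b : A) (t : A ⊗[k] A) :
    LinearMap.lTensor A (antipode k) (((1 : A) ⊗ₜ[k] b) * t) =
      LinearMap.lTensor A (antipode k) t * ((1 : A) ⊗ₜ[k] antipode k b) := by
  induction t using TensorProduct.induction_on with
  | zero => simp
  | tmul x y => simp [antipode_mul_antidistrib]
  | add x y hx hy => simp [mul_add, add_mul, hx, hy]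

lemma twistedGalois_antipode_tmul_antipode (a b : A) :
    twistedGalois (antipode k) (a ⊗ₜ[k] antipode k b) =
      LinearMap.lTensor A (antipode k) (((1 : A) ⊗ₜ[k] b) * comul (R := k) a) := by
  rw [twistedGalois_tmul, lTensor_antipode_one_tmul_mul]

/-- `Δ(a)(1 ⊗ S(b)) = c ⊗ S(b)` if and only if `(1 ⊗ b)Δ(c) = a ⊗ b`. -/
lemma comul_mul_antipode_eq_iff (hS : Function.Injective (antipode k : A →ₗ[k] A)) (a b c : A) :
    comul (R := k) a * ((1 : A) ⊗ₜ[k] antipode k b) = c ⊗ₜ[k] antipode k b ↔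
      ((1 : A) ⊗ₜ[k] b) * comul (R := k) c = a ⊗ₜ[k] b := by
  rw [comul_mul_one_tmul_eq_iff, twistedGalois_antipode_tmul_antipode,
    ← LinearMap.lTensor_tmul,
    (Module.Flat.lTensor_preserves_injective_linearMap (M := A) _ hS).eq_iff, eq_comm]

lemma algHom_comp_antipode_convMul {B : Type*} [Ring B] [Algebra k B] (φ : A →ₐ[k] B) :
    toConv (φ.toLinearMap ∘ₗ antipode k) * toConv φ.toLinearMap = 1 := by
  have h := LinearMap.algHom_comp_convMul_distrib φ (toConv (antipode k (A := A)))
    (toConv LinearMap.id)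
  rw [LinearMap.antipode_mul_id] at h
  apply WithConv.ofConv_injective
  simp only [LinearMap.comp_id] at h
  rw [← h]
  ext a
  simp [LinearMap.convOne_def]

/-- The antipode is an anti-homomorphism of coalgebras. -/
lemma comul_antipode (a : A) :
    comul (R := k) (antipode k a) =
      TensorProduct.map (antipode k) (antipode k) (TensorProduct.comm k A A (comul a)) := by
  let l : A →ₐ[k] A ⊗[k] A := Algebra.TensorProduct.includeLeft
  let r : A →ₐ[k] A ⊗[k] A := Algebra.TensorProduct.includeRight
  have hcomul : toConv (comul (R := k) (A := A)) =
      toConv l.toLinearMap * toConv r.toLinearMap := by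
    ext a
    simp only [LinearMap.convMul_apply]
    induction comul (R := k) a using TensorProduct.induction_on with
    | zero => simp
    | tmul x y => simp [l, r]
    | add x y hx hy => rw [map_add, map_add, ← hx, ← hy]
  have hanti : toConv (TensorProduct.map (antipode k) (antipode k) ∘ₗ
      (TensorProduct.comm k A A).toLinearMap ∘ₗ comul) =
      toConv (r.toLinearMap ∘ₗ antipode k) * toConv (l.toLinearMap ∘ₗ antipode k) := by
    ext a
    simp only [LinearMap.convMul_apply]
    change TensorProduct.map (antipode k) (antipode k)
      (TensorProduct.comm k A A (comul (R := k) a)) = _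
    induction comul (R := k) a using TensorProduct.induction_on with
    | zero => simp
    | tmul x y => simp [l, r]
    | add x y hx hy => simp only [map_add, hx, hy]
  have hinv : toConv (TensorProduct.map (antipode k) (antipode k) ∘ₗ
      (TensorProduct.comm k A A).toLinearMap ∘ₗ comul) *
      toConv (comul (R := k) (A := A)) = 1 := by
    rw [hanti, hcomul, mul_assoc, ← mul_assoc (toConv (l.toLinearMap ∘ₗ antipode k)),
      algHom_comp_antipode_convMul, one_mul, algHom_comp_antipode_convMul]
  have h := left_inv_eq_right_inv hinv LinearMap.comul_right_inv
  exact congr($(h.symm).ofConv a)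

lemma comul_antipode_antipode (a : A) :
    comul (R := k) (antipode k (antipode k a)) =
      TensorProduct.map (antipode k ∘ₗ antipode k) (antipode k ∘ₗ antipode k) (comul a) := by
  rw [comul_antipode, comul_antipode]
  induction comul (R := k) a using TensorProduct.induction_on with
  | zero => simp
  | tmul x y => simp
  | add x y hx hy => simp only [map_add, hx, hy]

lemma map_antipode_antipode_mul (s t : A ⊗[k] A) :
    TensorProduct.map (antipode k ∘ₗ antipode k) (antipode k ∘ₗ antipode k) (s * t) =
      TensorProduct.map (antipode k ∘ₗ antipode k) (antipode k ∘ₗ antipode k) s *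
        TensorProduct.map (antipode k ∘ₗ antipode k) (antipode k ∘ₗ antipode k) t := by
  induction s using TensorProduct.induction_on with
  | zero => simp
  | tmul x y =>
    induction t using TensorProduct.induction_on with
    | zero => simp
    | tmul u v => simp [antipode_mul_antidistrib]
    | add u v hu hv => simp only [mul_add, map_add, hu, hv]
  | add x y hx hy => simp only [add_mul, map_add, hx, hy]

end Antipode

section Shift

variable {k}

lemma tmul_right_cancel {V W : Type*} [AddCommGroup V] [Module k V] [AddCommGroup W] [Module k W]
    {v w : V} {x : W} (hx : x ≠ 0) (h : v ⊗ₜ[k] x = w ⊗ₜ[k] x) : v = w := by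
  obtain ⟨f, hf⟩ := Module.Projective.exists_dual_eq_one k hx
  simpa [hf] using congr(TensorProduct.rid k V (LinearMap.lTensor V f $h))

lemma lTensor_comul_mul (s t : A ⊗[k] A) :
    LinearMap.lTensor A (comul (R := k)) (s * t) =
      LinearMap.lTensor A comul s * LinearMap.lTensor A comul t :=
  map_mul (Algebra.TensorProduct.map (AlgHom.id k A) (Bialgebra.comulAlgHom k A)) s t

lemma assoc_rTensor_comul_mul (s t : A ⊗[k] A) :
    TensorProduct.assoc k A A A (LinearMap.rTensor A (comul (R := k)) (s * t)) =
      TensorProduct.assoc k A A A (LinearMap.rTensor A comul s) *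
        TensorProduct.assoc k A A A (LinearMap.rTensor A comul t) :=
  map_mul ((Algebra.TensorProduct.assoc k k k A A A).toAlgHom.comp
    (Algebra.TensorProduct.map (Bialgebra.comulAlgHom k A) (AlgHom.id k A))) s t

lemma assoc_rTensor_comul_one_tmul (b : A) :
    TensorProduct.assoc k A A A (LinearMap.rTensor A (comul (R := k)) ((1 : A) ⊗ₜ[k] b)) =
      (1 : A) ⊗ₜ[k] ((1 : A) ⊗ₜ[k] b) := by
  simp [Algebra.TensorProduct.one_def]

variable {P Q : A}

lemma one_tmul_mul_comul_of_shift (hQ0 : Q ≠ 0)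
    (hr : comul (R := k) Q * ((1 : A) ⊗ₜ[k] Q) = P ⊗ₜ[k] Q)
    (hl : ((1 : A) ⊗ₜ[k] Q) * comul (R := k) Q = P ⊗ₜ[k] Q) :
    ((1 : A) ⊗ₜ[k] P) * comul (R := k) P = P ⊗ₜ[k] P := by
  have h₁ := congrArg
    (LinearMap.lTensor A (comul (R := k)) · * ((1 : A) ⊗ₜ[k] ((1 : A) ⊗ₜ[k] Q))) hl
  have h₂ := congr(TensorProduct.assoc k A A A (LinearMap.rTensor A (comul (R := k)) $hr))
  have h₃ : ∀ t : A ⊗[k] A, ((1 : A) ⊗ₜ[k] comul (R := k) Q) *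
      TensorProduct.assoc k A A A (t ⊗ₜ[k] Q) =
      TensorProduct.assoc k A A A ((((1 : A) ⊗ₜ[k] P) * t) ⊗ₜ[k] Q) := by
    intro t
    induction t using TensorProduct.induction_on with
    | zero => simp
    | tmul x y =>
      have : y ⊗ₜ[k] Q = ((1 : A) ⊗ₜ[k] Q) * (y ⊗ₜ[k] (1 : A)) := by simp
      simp only [TensorProduct.assoc_tmul, Algebra.TensorProduct.tmul_mul_tmul, one_mul]
      rw [this, ← mul_assoc, hr]
      simp
    | add x y hx hy => simp only [TensorProduct.add_tmul, map_add, mul_add, hx, hy]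
  rw [assoc_rTensor_comul_mul, coassoc_apply, assoc_rTensor_comul_one_tmul,
    LinearMap.rTensor_tmul] at h₂
  rw [lTensor_comul_mul, LinearMap.lTensor_tmul, mul_assoc, h₂, h₃, LinearMap.lTensor_tmul,
    Algebra.TensorProduct.tmul_mul_tmul, mul_one, hr, ← TensorProduct.assoc_tmul] at h₁
  exact tmul_right_cancel hQ0 ((TensorProduct.assoc k A A A).injective h₁)

lemma comul_mul_one_tmul_of_shift (hQ0 : Q ≠ 0)
    (hr : comul (R := k) Q * ((1 : A) ⊗ₜ[k] Q) = P ⊗ₜ[k] Q)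
    (hl : ((1 : A) ⊗ₜ[k] Q) * comul (R := k) Q = P ⊗ₜ[k] Q) :
    comul (R := k) P * ((1 : A) ⊗ₜ[k] P) = P ⊗ₜ[k] P := by
  have h₁ := congr(((1 : A) ⊗ₜ[k] ((1 : A) ⊗ₜ[k] Q)) *
    LinearMap.lTensor A (comul (R := k)) $hr)
  have h₂ := congr(TensorProduct.assoc k A A A (LinearMap.rTensor A (comul (R := k)) $hl))
  have h₃ : ∀ t : A ⊗[k] A, TensorProduct.assoc k A A A (t ⊗ₜ[k] Q) *
      ((1 : A) ⊗ₜ[k] comul (R := k) Q) =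
      TensorProduct.assoc k A A A ((t * ((1 : A) ⊗ₜ[k] P)) ⊗ₜ[k] Q) := by
    intro t
    induction t using TensorProduct.induction_on with
    | zero => simp
    | tmul x y =>
      have : y ⊗ₜ[k] Q = (y ⊗ₜ[k] (1 : A)) * ((1 : A) ⊗ₜ[k] Q) := by simp
      simp only [TensorProduct.assoc_tmul, Algebra.TensorProduct.tmul_mul_tmul, mul_one]
      rw [this, mul_assoc, hl]
      simp
    | add x y hx hy => simp only [TensorProduct.add_tmul, map_add, add_mul, hx, hy]
  rw [assoc_rTensor_comul_mul, coassoc_apply, assoc_rTensor_comul_one_tmul,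
    LinearMap.rTensor_tmul] at h₂
  rw [lTensor_comul_mul, LinearMap.lTensor_tmul, ← mul_assoc, h₂, h₃, LinearMap.lTensor_tmul,
    Algebra.TensorProduct.tmul_mul_tmul, one_mul, hl, ← TensorProduct.assoc_tmul] at h₁
  exact tmul_right_cancel hQ0 ((TensorProduct.assoc k A A A).injective h₁)

lemma exists_functional_of_comul_mul {a b c : A} (hb : b ≠ 0)
    (h : comul (R := k) a * ((1 : A) ⊗ₜ[k] b) = c ⊗ₜ[k] b) :
    ∃ μ : A →ₗ[k] k, c = TensorProduct.rid k A
      (TensorProduct.map LinearMap.id μ (comul (R := k) a)) := by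
  obtain ⟨f, hf⟩ := Module.Projective.exists_dual_eq_one k hb
  refine ⟨f ∘ₗ LinearMap.mulRight k b, ?_⟩
  have h' := congr(TensorProduct.rid k A (LinearMap.lTensor A f $h))
  simp only [LinearMap.lTensor_tmul, TensorProduct.rid_tmul, hf, one_smul] at h'
  rw [← h']
  congr 1
  induction comul (R := k) a using TensorProduct.induction_on with
  | zero => simp
  | tmul x y => simp
  | add x y hx hy => simp [add_mul, hx, hy]

end Shift

/-- Theorem: for nonzero idempotents `P, Q`, the condition "`P` is a right group-like
projection and `Q` is a right shift of `P`" is equivalent to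
`(1 ⊗ S⁻¹(Q))Δ(P) = Q ⊗ S⁻¹(Q)` and `Δ(P)(1 ⊗ S(Q)) = Q ⊗ S(Q)`.  Moreover, if `Q` is a
right shift of `P` then `Q = (id ⊗ μ)(Δ(P))` for some functional `μ`, and
`S²(Q) = Q ↔ S²(P) = P`. -/
theorem statement15
    (Sinv : A →ₗ[k] A)
    (hinv : ∀ a : A, Sinv (HopfAlgebra.antipode (R := k) a) = a ∧
      HopfAlgebra.antipode (R := k) (Sinv a) = a)
    (P Q : A) (hP0 : P ≠ 0) (hP2 : P * P = P) (hQ0 : Q ≠ 0) (hQ2 : Q * Q = Q) :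
    ((IsRightGroupLikeProjection k P ∧
        Coalgebra.comul (R := k) Q * ((1 : A) ⊗ₜ[k] Q) = P ⊗ₜ[k] Q ∧
        ((1 : A) ⊗ₜ[k] Q) * Coalgebra.comul (R := k) Q = P ⊗ₜ[k] Q) ↔
      (((1 : A) ⊗ₜ[k] Sinv Q) * Coalgebra.comul (R := k) P = Q ⊗ₜ[k] Sinv Q ∧
        Coalgebra.comul (R := k) P *
            ((1 : A) ⊗ₜ[k] HopfAlgebra.antipode (R := k) Q) =
          Q ⊗ₜ[k] HopfAlgebra.antipode (R := k) Q)) ∧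
    ((IsRightGroupLikeProjection k P ∧
        Coalgebra.comul (R := k) Q * ((1 : A) ⊗ₜ[k] Q) = P ⊗ₜ[k] Q ∧
        ((1 : A) ⊗ₜ[k] Q) * Coalgebra.comul (R := k) Q = P ⊗ₜ[k] Q) →
      ((∃ μ : A →ₗ[k] k, Q = TensorProduct.rid k A
          ((TensorProduct.map LinearMap.id μ) (Coalgebra.comul (R := k) P))) ∧
       (HopfAlgebra.antipode (R := k) (HopfAlgebra.antipode (R := k) Q) = Q ↔
        HopfAlgebra.antipode (R := k) (HopfAlgebra.antipode (R := k) P) = P))) := by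
  have hS : Function.Injective (antipode k : A →ₗ[k] A) :=
    Function.LeftInverse.injective fun a => (hinv a).1
  have hiff : (comul (R := k) Q * ((1 : A) ⊗ₜ[k] Q) = P ⊗ₜ[k] Q ∧
        ((1 : A) ⊗ₜ[k] Q) * comul (R := k) Q = P ⊗ₜ[k] Q) ↔
      (((1 : A) ⊗ₜ[k] Sinv Q) * comul (R := k) P = Q ⊗ₜ[k] Sinv Q ∧
        comul (R := k) P * ((1 : A) ⊗ₜ[k] antipode k Q) = Q ⊗ₜ[k] antipode k Q) := by
    have h := comul_mul_antipode_eq_iff hS Q (Sinv Q) P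
    rw [(hinv Q).2] at h
    rw [h, comul_mul_antipode_eq_iff hS]
  have hSQ0 : antipode k Q ≠ 0 := (map_ne_zero_iff _ hS).2 hQ0
  refine ⟨⟨fun h => hiff.1 h.2, fun h => ?_⟩, ?_⟩
  · obtain ⟨hr, hl⟩ := hiff.2 h
    exact ⟨⟨hP0, hP2, comul_mul_one_tmul_of_shift hQ0 hr hl,
      one_tmul_mul_comul_of_shift hQ0 hr hl⟩, hr, hl⟩
  · rintro ⟨-, hshift⟩
    obtain ⟨hPl, hPr⟩ := hiff.1 hshift
    refine ⟨exists_functional_of_comul_mul hSQ0 hPr, fun hQ => ?_, fun hP => ?_⟩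
    · have h := congr(TensorProduct.map (antipode k ∘ₗ antipode k)
        (antipode k ∘ₗ antipode k) $(hshift.1))
      rw [map_antipode_antipode_mul, ← comul_antipode_antipode] at h
      simp only [TensorProduct.map_tmul, LinearMap.comp_apply, antipode_one, hQ, hshift.1] at h
      exact (tmul_right_cancel hQ0 h).symm
    · have h := congr(TensorProduct.map (antipode k ∘ₗ antipode k)
        (antipode k ∘ₗ antipode k) $hPl)
      rw [map_antipode_antipode_mul, ← comul_antipode_antipode] at h
      simp only [TensorProduct.map_tmul, LinearMap.comp_apply, antipode_one, hP,
        (hinv Q).2] at h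
      have hidem : antipode k Q * antipode k Q = antipode k Q := by
        rw [← antipode_mul_antidistrib, hQ2]
      have h' := congr($h * ((1 : A) ⊗ₜ[k] antipode k Q))
      rw [mul_assoc, hPr] at h'
      simp only [Algebra.TensorProduct.tmul_mul_tmul, one_mul, mul_one, hidem] at h'
      exact (tmul_right_cancel hSQ0 h').symm
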